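/- Let R be a commutative Noetherian ring of prime characteristic p and M any R-module. Then M is an Artinian R-module if and only if F_R(M) is an Artinian R-module. -/

import Mathlib

/-!
If `M` is Artinian, then so is `F_R(M)` by a general fact about base change: `S ⊗ M` is an Artinian
`S`-module as soon as `R` is Noetherian and `S / JS` is Artinian for every maximal ideal `J` of `R`
(`isArtinian_tensor`). For `S` the ring `R` over itself via Frobenius, `JS` is generated by the
`p`-th powers of elements of `J`, so `S / JS` has finite length. The general fact is proved by
Noetherian induction on an ideal `J` killing the module: an element `x ∉ J` splits the module into
pieces that are smaller or killed by a larger ideal, using that a module on which `x` is locally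
nilpotent is Artinian once `ker x` is; the remaining case is that of a finite-dimensional vector
space over `R / J`.

Conversely, let `F_R(M)` be Artinian. Suppose first that Frobenius has an additive splitting `ρ`
linear over `p`-th powers. Then `b ⊗ n ↦ ρ b • n` is a retraction of `M → F_R(M)` respecting
submodules, and submodules of `M` embed, as an ordered set, into submodules of `F_R(M)`. Next let
the base ring `T` be complete local. Its residue field is formally smooth over the prime field, so
`T` contains a copy of it and is a quotient `A / I` of a power series ring `A` over a field (Cohen).
Frobenius splits on `A`, the module `F_A(M) / I F_A(M)` is an image of `F_T(M)`, and `I` is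
nilpotent on `F_A(M)`; so `F_A(M)`, hence `M`, is Artinian (`isArtinian_of_frobModule_of_complete`).

In general, completion at a maximal ideal `m` is flat, preserves Artinian modules and commutes with
the Frobenius functor, so every descending chain in `M` stabilises locally at `m`. An Artinian
module has only finitely many maximal ideals in its socle and vanishes locally elsewhere; this
applies to `F_R(M)`, and the vanishing passes to `M` by the same argument through the completion.
Hence one stage of the chain works for all `m` (`isArtinian_of_frobModule`).
-/

open TensorProduct IsLocalRing

universe u v

/-- `R` viewed as an `R`-algebra via the Frobenius `r ↦ r ^ p`.  As an `R`-module this is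
the right-module structure of the bimodule `R^f`, i.e. `s · r = s * r ^ p`. -/
def FrobTwist (R : Type u) [CommRing R] (p : ℕ) [Fact p.Prime] [CharP R p] : Type u := R

noncomputable instance (R : Type u) [CommRing R] (p : ℕ) [Fact p.Prime] [CharP R p] :
    CommRing (FrobTwist R p) := inferInstanceAs (CommRing R)

noncomputable instance (R : Type u) [CommRing R] (p : ℕ) [Fact p.Prime] [CharP R p] :
    Algebra R (FrobTwist R p) := (frobenius R p).toAlgebra

/-- The element of `FrobTwist R p` corresponding to `r : R`. -/
def FrobTwist.of (R : Type u) [CommRing R] (p : ℕ) [Fact p.Prime] [CharP R p] (r : R) :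
    FrobTwist R p := r

/-- The Frobenius functor `F_R(M) = R^f ⊗_R M`, with its left `R`-module structure
coming from multiplication on the left tensor factor. -/
def FrobModule (R : Type u) [CommRing R] (p : ℕ) [Fact p.Prime] [CharP R p]
    (M : Type v) [AddCommGroup M] [Module R M] : Type (max u v) :=
  FrobTwist R p ⊗[R] M

noncomputable instance (R : Type u) [CommRing R] (p : ℕ) [Fact p.Prime] [CharP R p]
    (M : Type v) [AddCommGroup M] [Module R M] : AddCommGroup (FrobModule R p M) :=
  inferInstanceAs (AddCommGroup (FrobTwist R p ⊗[R] M))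

noncomputable instance (R : Type u) [CommRing R] (p : ℕ) [Fact p.Prime] [CharP R p]
    (M : Type v) [AddCommGroup M] [Module R M] : Module R (FrobModule R p M) :=
  inferInstanceAs (Module (FrobTwist R p) (FrobTwist R p ⊗[R] M))

/-! ### Chains of submodules -/

theorem isArtinian_of_antitone {R : Type*} {M : Type*} [Ring R] [AddCommGroup M] [Module R M]
    (h : ∀ N : ℕ → Submodule R M, Antitone N → ∃ n, ∀ m, n ≤ m → N n ≤ N m) : IsArtinian R M := by
  refine monotone_stabilizes_iff_artinian.mp fun f => ?_
  obtain ⟨n, hn⟩ := h (fun i => OrderDual.ofDual (f i)) (fun i j hij => f.monotone hij)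
  exact ⟨n, fun m hm => le_antisymm (f.monotone hm) (hn m hm)⟩

theorem IsArtinian.exists_antitone_stable {R : Type*} {M : Type*} [Ring R] [AddCommGroup M]
    [Module R M] [IsArtinian R M] (N : ℕ → Submodule R M) (hN : Antitone N) :
    ∃ n, ∀ m, n ≤ m → N n = N m :=
  IsArtinian.monotone_stabilizes (R := R) (M := M)
    ⟨fun i => OrderDual.toDual (N i), fun _ _ hij => hN hij⟩

/-- A module on which `y` acts locally nilpotently is Artinian as soon as `ker y` is. For a
descending chain `N i` the submodules `y ^ j • N i ∩ ker y` descend in both indices, so they are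
constant in `i` from a stage independent of `j`; the vectors killed by `y ^ j` are then compared by
induction on `j`. -/
theorem isArtinian_of_isArtinian_ker {S H : Type*} [CommRing S] [AddCommGroup H] [Module S H]
    (y : S) (hnil : ∀ h : H, ∃ j : ℕ, y ^ j • h = 0)
    [IsArtinian S (LinearMap.ker (LinearMap.lsmul S H y))] : IsArtinian S H := by
  refine isArtinian_of_antitone fun N hN => ?_
  let K := LinearMap.ker (LinearMap.lsmul S H y)
  let W : ℕ → ℕ → Submodule S K := fun i j =>
    ((N i).map (LinearMap.lsmul S H (y ^ j))).comap K.subtype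
  have hWi : ∀ j, Antitone fun i => W i j := fun j i i' h =>
    Submodule.comap_mono (Submodule.map_mono (hN h))
  have hWj : ∀ i, Antitone fun j => W i j := by
    refine fun i => antitone_nat_of_succ_le fun j => ?_
    rintro ⟨z, hz⟩ ⟨h, hh, hhz⟩
    refine ⟨y • h, (N i).smul_mem _ hh, ?_⟩
    rw [← hhz]
    simp only [LinearMap.lsmul_apply, pow_succ, mul_smul]
  obtain ⟨_, ⟨⟨i0, j0⟩, rfl⟩, hmin⟩ := IsArtinian.set_has_minimal
    (Set.range fun q : ℕ × ℕ => W q.1 q.2) ⟨_, ⟨(0, 0), rfl⟩⟩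
  have hstab : ∀ i j, i0 ≤ i → j0 ≤ j → W i j = W i0 j0 := by
    intro i j hi hj
    have hle : W i j ≤ W i0 j0 := (hWi j hi).trans (hWj i0 hj)
    exact (hle.lt_or_eq.resolve_left (hmin _ ⟨(i, j), rfl⟩))
  -- for the finitely many `j < j0` each chain `W · j` stabilises on its own
  choose n hn using fun j => IsArtinian.exists_antitone_stable (fun i => W i j) (hWi j)
  let i1 := max i0 ((Finset.range j0).sup n)
  have key : ∀ i, i1 ≤ i → ∀ j, W i1 j ≤ W i j := by
    intro i hi j
    by_cases hj : j0 ≤ j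
    · rw [hstab i j ((le_max_left _ _).trans hi) hj, hstab i1 j (le_max_left _ _) hj]
    · have hnj : n j ≤ i1 :=
        (Finset.le_sup (f := n) (Finset.mem_range.mpr (not_le.mp hj))).trans (le_max_right _ _)
      exact ((hn j i1 hnj).symm.trans (hn j i (hnj.trans hi))).le
  refine ⟨i1, fun i hi => ?_⟩
  have : ∀ j, ∀ h ∈ N i1, y ^ j • h = 0 → h ∈ N i := by
    intro j
    induction j with
    | zero => intro h _ h0; rw [pow_zero, one_smul] at h0; rw [h0]; exact zero_mem _
    | succ j ih =>
      intro h hh h0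
      have hz : y ^ j • h ∈ K := by
        rw [LinearMap.mem_ker, LinearMap.lsmul_apply, ← mul_smul, ← pow_succ']
        exact h0
      obtain ⟨h', hh', he⟩ := key i hi j (show (⟨y ^ j • h, hz⟩ : K) ∈ W i1 j from ⟨h, hh, rfl⟩)
      have hs : h - h' ∈ N i := by
        refine ih _ ((N i1).sub_mem hh (hN hi hh')) ?_
        rw [smul_sub, sub_eq_zero]
        exact he.symm
      simpa using (N i).add_mem hs hh'
  intro h hh
  obtain ⟨j, hj⟩ := hnil h
  exact this j h hh hj

/-! ### Base change of Artinian modules -/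

section BaseChange

variable {R : Type*} [CommRing R] (S : Type*) [CommRing S] [Algebra R S]

theorem isArtinian_tensor_of_surjective {M N : Type*} [AddCommGroup M] [Module R M]
    [AddCommGroup N] [Module R N] (g : M →ₗ[R] N) (hg : Function.Surjective g)
    (hM : IsArtinian S (S ⊗[R] M)) : IsArtinian S (S ⊗[R] N) := by
  refine isArtinian_of_surjective _ (g.baseChange S) ?_
  exact LinearMap.lTensor_surjective S hg

theorem isArtinian_tensor_of_exact {M N P : Type*} [AddCommGroup M] [Module R M]
    [AddCommGroup N] [Module R N] [AddCommGroup P] [Module R P]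
    (f : M →ₗ[R] N) (g : N →ₗ[R] P) (hfg : Function.Exact f g) (hg : Function.Surjective g)
    (hM : IsArtinian S (S ⊗[R] M)) (hP : IsArtinian S (S ⊗[R] P)) : IsArtinian S (S ⊗[R] N) := by
  refine isArtinian_of_range_eq_ker (f.baseChange S) (g.baseChange S) ?_
  have := lTensor_exact S hfg hg
  ext x
  exact (this x).symm

theorem isArtinian_tensor_of_ker_of_range {N P : Type*} [AddCommGroup N] [Module R N]
    [AddCommGroup P] [Module R P] (g : N →ₗ[R] P)
    (h1 : IsArtinian S (S ⊗[R] LinearMap.ker g)) (h2 : IsArtinian S (S ⊗[R] LinearMap.range g)) :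
    IsArtinian S (S ⊗[R] N) := by
  refine isArtinian_tensor_of_exact S (LinearMap.ker g).subtype g.rangeRestrict ?_
    g.surjective_rangeRestrict h1 h2
  rw [LinearMap.exact_iff, LinearMap.ker_rangeRestrict, Submodule.range_subtype]

theorem isArtinian_tensor_of_sup_eq_top {N : Type*} [AddCommGroup N] [Module R N]
    (T U : Submodule R N) (hTU : T ⊔ U = ⊤) (hT : IsArtinian S (S ⊗[R] T))
    (hU : IsArtinian S (S ⊗[R] U)) : IsArtinian S (S ⊗[R] N) := by
  have : IsArtinian S (S ⊗[R] (T × U)) :=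
    isArtinian_of_linearEquiv (TensorProduct.prodRight R S S T U).symm
  refine isArtinian_tensor_of_surjective S (T.subtype.coprod U.subtype) ?_ this
  rw [← LinearMap.range_eq_top, LinearMap.range_coprod, Submodule.range_subtype,
    Submodule.range_subtype, hTU]

/-- Base change of an Artinian module killed by a maximal ideal: the module is a finite-dimensional
vector space, so its base change is a finite module over the Artinian ring `S / JS`. -/
theorem isArtinian_tensor_of_isMaximal (J : Ideal R) [J.IsMaximal]
    (hS : IsArtinian S (S ⧸ J.map (algebraMap R S))) (N : Type*) [AddCommGroup N] [Module R N]
    [IsArtinian R N] (hJ : ∀ a ∈ J, ∀ n : N, a • n = 0) : IsArtinian S (S ⊗[R] N) := by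
  have hfg : Module.Finite R N := by
    have hT : Module.IsTorsionBySet R N J := fun n a => hJ a a.2 n
    let := hT.module
    let := Ideal.Quotient.field J
    have : IsScalarTower R (R ⧸ J) N := hT.isScalarTower
    have : IsArtinian (R ⧸ J) N := isArtinian_of_tower R inferInstance
    have : IsNoetherian (R ⧸ J) N := IsSemiprimaryRing.isNoetherian_iff_isArtinian.mpr inferInstance
    exact Module.Finite.trans (R ⧸ J) N
  let I := J.map (algebraMap R S)
  have hT : Module.IsTorsionBySet S (S ⊗[R] N) I := by
    rintro z ⟨a, ha⟩
    change a • z = 0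
    have : I ≤ Module.annihilator S (S ⊗[R] N) := by
      rw [Ideal.map_le_iff_le_comap]
      intro b hb
      rw [Ideal.mem_comap, Module.mem_annihilator]
      intro z
      induction z with
      | zero => simp
      | add x y hx hy => rw [smul_add, hx, hy, add_zero]
      | tmul s n =>
        rw [algebraMap_smul, ← TensorProduct.tmul_smul, hJ b hb, TensorProduct.tmul_zero]
    exact Module.mem_annihilator.mp (this ha) z
  let := hT.module
  have : IsScalarTower S (S ⧸ I) (S ⊗[R] N) := hT.isScalarTower
  have : IsArtinianRing (S ⧸ I) := isArtinian_of_tower S hS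
  have : Module.Finite S (S ⊗[R] N) := inferInstance
  have : Module.Finite (S ⧸ I) (S ⊗[R] N) := Module.Finite.of_restrictScalars_finite S _ _
  have : IsArtinian (S ⧸ I) (S ⊗[R] N) := inferInstance
  exact (LinearMap.isArtinian_iff_of_bijective (σ := Ideal.Quotient.mk I)
    ({ toFun := id, map_add' := fun _ _ => rfl, map_smul' := fun s x => rfl } :
      S ⊗[R] N →ₛₗ[Ideal.Quotient.mk I] S ⊗[R] N) Function.bijective_id).mpr inferInstance

/-- The chain `x ^ j • n` of cyclic submodules stabilises. -/
theorem IsArtinian.exists_pow_smul_eq {N : Type*} [AddCommGroup N] [Module R N] [IsArtinian R N]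
    (x : R) (n : N) : ∃ (j : ℕ) (r : R), x ^ j • n = (r * x ^ (j + 1)) • n := by
  obtain ⟨j, ⟨y, hy⟩, h⟩ := IsArtinian.exists_pow_succ_smul_dvd (M := Submodule.span R {n}) x
    ⟨n, Submodule.mem_span_singleton_self n⟩
  obtain ⟨r, rfl⟩ := Submodule.mem_span_singleton.mp hy
  refine ⟨j, r, ?_⟩
  have := congrArg Subtype.val h
  simp only [Submodule.coe_smul] at this
  rw [← this, ← mul_smul, mul_comm]

/-- The inductive step for `isArtinian_tensor`: `N` is killed by `J`, and the claim is known for the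
proper submodules of `N` and for those killed by a strictly larger ideal. Elements `x ∉ J` are used
to break `N` into such pieces; if this fails, every `x ∉ J` acts bijectively on `N`, and then `J` is
maximal. -/
theorem isArtinian_tensor_step (J : Ideal R)
    (hS : ∀ J : Ideal R, J.IsMaximal → IsArtinian S (S ⧸ J.map (algebraMap R S)))
    {N : Type*} [AddCommGroup N] [Module R N] [IsArtinian R N] (hJ : ∀ a ∈ J, ∀ n : N, a • n = 0)
    (IH : ∀ J' : Ideal R, J < J' → ∀ T : Submodule R N, (∀ a ∈ J', ∀ n ∈ T, a • n = 0) →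
      IsArtinian S (S ⊗[R] T))
    (hN : ∀ T : Submodule R N, T ≠ ⊤ → IsArtinian S (S ⊗[R] T)) : IsArtinian S (S ⊗[R] N) := by
  have hker : ∀ x, x ∉ J → IsArtinian S (S ⊗[R] LinearMap.ker (LinearMap.lsmul R N x)) := by
    intro x hx
    refine IH (J ⊔ Ideal.span {x}) (left_lt_sup.mpr fun h => hx ?_) _ fun a ha n hn => ?_
    · exact h (Ideal.mem_span_singleton_self x)
    · obtain ⟨b, hb, c, hc, rfl⟩ := Submodule.mem_sup.mp ha
      obtain ⟨d, rfl⟩ := Ideal.mem_span_singleton'.mp hc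
      have hn' : x • n = 0 := hn
      rw [add_smul, hJ b hb, mul_smul, hn', smul_zero, add_zero]
  by_cases h1 : ∃ x, x ∉ J ∧ LinearMap.range (LinearMap.lsmul R N x) ≠ ⊤
  · obtain ⟨x, hx, hr⟩ := h1
    exact isArtinian_tensor_of_ker_of_range S _ (hker x hx) (hN _ hr)
  push Not at h1
  by_cases h2 : ∃ x, x ∉ J ∧ LinearMap.ker (LinearMap.lsmul R N x) ≠ ⊥
  · obtain ⟨x, hx, hk⟩ := h2
    -- Fitting-type decomposition: the `x`-power torsion and the `x`-divisible part span `N`.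
    let T : Submodule R N :=
      { carrier := {n | ∃ j : ℕ, x ^ j • n = 0}
        zero_mem' := ⟨0, smul_zero _⟩
        add_mem' := by
          rintro a b ⟨i, hi⟩ ⟨j, hj⟩
          refine ⟨i + j, ?_⟩
          rw [smul_add, pow_add, mul_smul, mul_smul, hj, smul_zero, add_zero, ← mul_smul, mul_comm,
            mul_smul, hi, smul_zero]
        smul_mem' := by
          rintro r a ⟨i, hi⟩
          exact ⟨i, by rw [smul_comm, hi, smul_zero]⟩ }
    let U : Submodule R N :=
      { carrier := {n | ∃ r : R, n = (r * x) • n}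
        zero_mem' := ⟨0, by simp⟩
        add_mem' := by
          rintro a b ⟨r, hr⟩ ⟨s, hs⟩
          refine ⟨r + s - r * s * x, ?_⟩
          have e1 : ((r + s - r * s * x) * x) • a = a := by
            have : ((r + s - r * s * x) * x) • a = (r * x) • a + (s * x) • (a - (r * x) • a) := by
              module
            rw [this, ← hr]; simp
          have e2 : ((r + s - r * s * x) * x) • b = b := by
            have : ((r + s - r * s * x) * x) • b = (s * x) • b + (r * x) • (b - (s * x) • b) := by
              module
            rw [this, ← hs]; simp
          rw [smul_add, e1, e2]
        smul_mem' := by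
          rintro c a ⟨r, hr⟩
          exact ⟨r, by rw [smul_comm, ← hr]⟩ }
    have hTU : T ⊔ U = ⊤ := by
      rw [eq_top_iff]
      rintro n -
      obtain ⟨j, r, h⟩ := IsArtinian.exists_pow_smul_eq x n
      have hit : ∀ i : ℕ, x ^ j • n = (r ^ i * x ^ (j + i)) • n := by
        intro i
        induction i with
        | zero => simp
        | succ i ih =>
          calc x ^ j • n = (r ^ i * x ^ (j + i)) • n := ih
            _ = (r ^ i * x ^ i) • (x ^ j • n) := by module
            _ = (r ^ i * x ^ i) • ((r * x ^ (j + 1)) • n) := congrArg _ h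
            _ = (r ^ (i + 1) * x ^ (j + (i + 1))) • n := by module
      have hu : (r ^ j * x ^ j) • n ∈ U := by
        refine ⟨r, ?_⟩
        calc (r ^ j * x ^ j) • n = r ^ j • (x ^ j • n) := by module
          _ = _ := by rw [h]; module
      have ht : n - (r ^ j * x ^ j) • n ∈ T := by
        refine ⟨j, ?_⟩
        have := hit j
        rw [smul_sub, sub_eq_zero]
        exact this.trans (by module)
      have := Submodule.add_mem_sup ht hu
      simpa using this
    have hU : U ≠ ⊤ := by
      intro h
      refine hk ((Submodule.eq_bot_iff _).mpr fun n hn => ?_)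
      obtain ⟨r, hr⟩ : n ∈ U := h ▸ Submodule.mem_top
      have hn' : x • n = 0 := hn
      rw [hr, mul_smul, hn', smul_zero]
    by_cases hT : T = ⊤
    -- `x` is onto and locally nilpotent on `N`, so `ker (x ⊗ 1)` is a quotient of `S ⊗ ker x`
    · have hex : Function.Exact (LinearMap.ker (LinearMap.lsmul R N x)).subtype
          (LinearMap.lsmul R N x) := by
        rw [LinearMap.exact_iff, Submodule.range_subtype]
      have hex' := lTensor_exact S hex (LinearMap.range_eq_top.mp (h1 x hx))
      have hsm : ∀ z : S ⊗[R] N, algebraMap R S x • z =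
          LinearMap.lTensor S (LinearMap.lsmul R N x) z := by
        intro z
        induction z with
        | zero => simp
        | add a b ha hb => rw [smul_add, map_add, ha, hb]
        | tmul s n =>
          rw [algebraMap_smul, LinearMap.lTensor_tmul, LinearMap.lsmul_apply,
            TensorProduct.tmul_smul]
      have := hker x hx
      have : IsArtinian S (LinearMap.ker (LinearMap.lsmul S (S ⊗[R] N) (algebraMap R S x))) := by
        have hr : LinearMap.ker (LinearMap.lsmul S (S ⊗[R] N) (algebraMap R S x)) =
            LinearMap.range ((LinearMap.ker (LinearMap.lsmul R N x)).subtype.baseChange S) := by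
          ext z
          rw [LinearMap.mem_ker, LinearMap.lsmul_apply, hsm]
          exact hex' z
        rw [hr]
        infer_instance
      refine isArtinian_of_isArtinian_ker (algebraMap R S x) fun z => ?_
      induction z with
      | zero => exact ⟨0, smul_zero _⟩
      | add a b ha hb =>
        obtain ⟨i, hi⟩ := ha
        obtain ⟨j, hj⟩ := hb
        refine ⟨i + j, ?_⟩
        rw [smul_add, pow_add, mul_smul, mul_smul, hj, smul_zero, add_zero, ← mul_smul, mul_comm,
          mul_smul, hi, smul_zero]
      | tmul s n =>
        obtain ⟨j, hj⟩ : n ∈ T := hT ▸ Submodule.mem_top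
        refine ⟨j, ?_⟩
        rw [← map_pow, algebraMap_smul, ← TensorProduct.tmul_smul, hj, TensorProduct.tmul_zero]
    · exact isArtinian_tensor_of_sup_eq_top S T U hTU (hN T hT) (hN U hU)
  push Not at h2
  -- Every `x ∉ J` acts bijectively, so `J` is maximal unless `N = 0`.
  rcases subsingleton_or_nontrivial N with hsub | hnt
  · infer_instance
  · obtain ⟨n, hn⟩ := exists_ne (0 : N)
    have hinj : ∀ x, x ∉ J → ∀ m : N, x • m = 0 → m = 0 := fun x hx m hm =>
      (Submodule.eq_bot_iff _).mp (h2 x hx) m hm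
    have hmax : J.IsMaximal := by
      refine Ideal.isMaximal_iff.mpr ⟨fun h => hn ?_, fun J' x hJJ' hx hx' => ?_⟩
      · simpa using hJ 1 h n
      · obtain ⟨j, r, h⟩ := IsArtinian.exists_pow_smul_eq x n
        have hpow : ∀ (j : ℕ) (m : N), x ^ j • m = 0 → m = 0 := by
          intro j
          induction j with
          | zero => intro m hm; simpa using hm
          | succ j ih =>
            intro m hm
            rw [pow_succ, mul_smul] at hm
            exact hinj x hx m (ih _ hm)
        have h0 : (1 - r * x) • n = 0 := by
          refine hpow j _ ?_
          have : x ^ j • (1 - r * x) • n = x ^ j • n - (r * x ^ (j + 1)) • n := by module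
          rw [this, ← h, sub_self]
        have hmem : 1 - r * x ∈ J := by
          by_contra hc
          exact hn (hinj _ hc n h0)
        have := J'.add_mem (hJJ' hmem) (J'.mul_mem_left r hx')
        simpa using this
    exact isArtinian_tensor_of_isMaximal S J (hS J hmax) N hJ

/-- Let `R` be Noetherian and `S` an `R`-algebra such that `S / JS` is an Artinian `S`-module for
every maximal ideal `J` of `R`. Then base change to `S` preserves Artinian modules. The proof is by
Noetherian induction on an ideal killing the module, and then by induction on submodules. -/
theorem isArtinian_tensor [IsNoetherianRing R]
    (hS : ∀ J : Ideal R, J.IsMaximal → IsArtinian S (S ⧸ J.map (algebraMap R S)))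
    (M : Type*) [AddCommGroup M] [Module R M] [IsArtinian R M] : IsArtinian S (S ⊗[R] M) := by
  have key : ∀ (J : Ideal R) (N : Submodule R M), (∀ a ∈ J, ∀ n ∈ N, a • n = 0) →
      IsArtinian S (S ⊗[R] N) := by
    intro J
    induction J using WellFoundedGT.induction with
    | ind J IHJ =>
      intro N
      induction N using WellFoundedLT.induction with
      | ind N IHN =>
        intro hJ
        have tr : ∀ T : Submodule R N, IsArtinian S (S ⊗[R] (T.map N.subtype)) →
            IsArtinian S (S ⊗[R] T) := fun T h =>
          isArtinian_tensor_of_surjective S (Submodule.equivSubtypeMap N T).symm.toLinearMap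
            (Submodule.equivSubtypeMap N T).symm.surjective h
        refine isArtinian_tensor_step S J hS (fun a ha n => Subtype.ext (hJ a ha n n.2)) ?_ ?_
        · intro J' hJ' T hT
          refine tr T (IHJ J' hJ' _ ?_)
          rintro a ha _ ⟨n, hn, rfl⟩
          exact congrArg Subtype.val (hT a ha n hn)
        · intro T hT
          refine tr T (IHN _ ?_ ?_)
          · refine lt_of_le_of_ne (Submodule.map_subtype_le N T) fun h => hT ?_
            refine Submodule.map_injective_of_injective N.injective_subtype ?_
            rw [h, Submodule.map_top, Submodule.range_subtype]
          · rintro a ha _ ⟨n, hn, rfl⟩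
            exact hJ a ha n n.2
  refine isArtinian_tensor_of_surjective S (⊤ : Submodule R M).subtype ?_ (key ⊥ ⊤ ?_)
  · exact fun m => ⟨⟨m, trivial⟩, rfl⟩
  · rintro a ha n -
    rw [(Submodule.mem_bot R).mp ha, zero_smul]

end BaseChange

/-! ### The Frobenius functor on Artinian modules; nilpotent ideals -/

theorem isArtinian_quotient_of_pow_mem {R : Type*} [CommRing R] [IsNoetherianRing R]
    (J I : Ideal R) [J.IsMaximal] (h : ∀ a ∈ J, ∃ n : ℕ, a ^ n ∈ I) : IsArtinian R (R ⧸ I) := by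
  have : Ring.KrullDimLE 0 (R ⧸ I) := by
    refine Ring.krullDimLE_zero_iff.mpr fun P hP => ?_
    have hQ : J ≤ P.comap (Ideal.Quotient.mk I) := by
      intro a ha
      obtain ⟨n, hn⟩ := h a ha
      refine hP.mem_of_pow_mem n ?_
      rw [← map_pow, Ideal.Quotient.eq_zero_iff_mem.mpr hn]
      exact zero_mem _
    have hQp : (P.comap (Ideal.Quotient.mk I)).IsPrime := inferInstance
    have hJ : J = P.comap (Ideal.Quotient.mk I) :=
      Ideal.IsMaximal.eq_of_le inferInstance hQp.ne_top hQ
    have hQm : (P.comap (Ideal.Quotient.mk I)).IsMaximal := hJ ▸ inferInstance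
    have := Ideal.map_eq_top_or_isMaximal_of_surjective (Ideal.Quotient.mk I)
      Ideal.Quotient.mk_surjective hQm
    rw [Ideal.map_comap_of_surjective _ Ideal.Quotient.mk_surjective] at this
    exact this.resolve_left hP.ne_top
  have : IsArtinianRing (R ⧸ I) := isArtinianRing_iff_krullDimLE_zero.mpr this
  exact isArtinian_of_surjective_algebraMap (R := R ⧸ I) Ideal.Quotient.mk_surjective

/-- The Frobenius functor preserves Artinian modules: for `J` maximal, `J` is nilpotent modulo the
ideal generated by the `p`-th powers of its elements. -/
theorem isArtinian_frobModule {R : Type*} [CommRing R] [IsNoetherianRing R] (p : ℕ) [Fact p.Prime]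
    [CharP R p] (M : Type*) [AddCommGroup M] [Module R M] [IsArtinian R M] :
    IsArtinian R (FrobModule R p M) := by
  have : IsNoetherianRing (FrobTwist R p) := inferInstanceAs (IsNoetherianRing R)
  refine isArtinian_tensor (FrobTwist R p) (fun J hJ => ?_) M
  exact isArtinian_quotient_of_pow_mem (R := R) J (J.map (algebraMap R (FrobTwist R p)))
    fun a ha => ⟨p, Ideal.mem_map_of_mem (algebraMap R (FrobTwist R p)) ha⟩

/-- Transfer of the Artinian property along an additive surjection that intertwines each scalar of
`R` with some scalar of `A`. -/
theorem isArtinian_of_surjective_addHom {R A X Y : Type*} [Ring R] [Ring A] [AddCommGroup X]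
    [Module R X] [AddCommGroup Y] [Module A Y] [IsArtinian R X] (f : X →+ Y)
    (hf : Function.Surjective f) (h : ∀ r : R, ∃ a : A, ∀ x, f (r • x) = a • f x) :
    IsArtinian A Y := by
  let c : Submodule A Y → Submodule R X := fun V =>
    { carrier := {x | f x ∈ V}
      zero_mem' := by simp
      add_mem' := fun {a b} ha hb => by
        simp only [Set.mem_ofPred_eq, map_add] at *
        exact V.add_mem ha hb
      smul_mem' := fun r x hx => by
        obtain ⟨a, ha⟩ := h r
        simp only [Set.mem_ofPred_eq, ha] at *
        exact V.smul_mem a hx }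
  have hc : StrictMono c := by
    refine Monotone.strictMono_of_injective (fun V W hVW x hx => hVW hx) fun V W hVW => ?_
    ext y
    obtain ⟨x, rfl⟩ := hf y
    exact SetLike.ext_iff.mp hVW x
  exact hc.wellFoundedLT

section Nilpotent

variable {B Y : Type*} [CommRing B] [AddCommGroup Y] [Module B Y]

/-- With `K` generated by `g₁, …, gₙ`, the quotient `K Y / I K Y` is an image of `(Y / I Y) ^ n`, so
`Y / I K Y` is an extension of Artinian modules. -/
theorem isArtinian_quotient_mul_smul (I K : Ideal B) (hK : K.FG)
    (hI : IsArtinian B (Y ⧸ (I • ⊤ : Submodule B Y)))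
    (hK' : IsArtinian B (Y ⧸ (K • ⊤ : Submodule B Y))) :
    IsArtinian B (Y ⧸ ((I * K) • ⊤ : Submodule B Y)) := by
  classical
  obtain ⟨s, rfl⟩ := hK
  let Q : Submodule B Y := (I * Ideal.span (s : Set B)) • ⊤
  let ψ : s → (Y ⧸ (I • ⊤ : Submodule B Y)) →ₗ[B] Y ⧸ Q := fun g =>
    Submodule.mapQ _ Q (LinearMap.lsmul B Y g) (by
      rw [Submodule.smul_le]
      intro a ha y _
      change g.1 • a • y ∈ Q
      rw [← mul_smul, mul_comm]
      exact Submodule.smul_mem_smul (Ideal.mul_mem_mul ha (Ideal.subset_span g.2)) trivial)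
  have hle : Q ≤ Ideal.span (s : Set B) • ⊤ := Submodule.smul_mono_left Ideal.mul_le_right
  refine isArtinian_of_range_eq_ker (M := s → Y ⧸ (I • ⊤ : Submodule B Y))
    (P := Y ⧸ (Ideal.span (s : Set B) • ⊤ : Submodule B Y))
    (LinearMap.lsum B _ B ψ) (Submodule.factor hle) ?_
  have hk : LinearMap.ker (Submodule.factor hle) =
      (Ideal.span (s : Set B) • ⊤ : Submodule B Y).map Q.mkQ := by
    ext z
    obtain ⟨y, rfl⟩ := Q.mkQ_surjective z
    rw [LinearMap.mem_ker, show Submodule.factor hle (Q.mkQ y) = Submodule.Quotient.mk y from rfl,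
      Submodule.Quotient.mk_eq_zero, Submodule.mem_map]
    constructor
    · exact fun h => ⟨y, h, rfl⟩
    · rintro ⟨y', hy', h⟩
      have := hle ((Submodule.Quotient.eq Q).mp h)
      simpa using Submodule.sub_mem _ hy' this
  rw [hk]
  apply le_antisymm
  · rintro _ ⟨v, rfl⟩
    rw [LinearMap.lsum_apply, LinearMap.sum_apply]
    refine Submodule.sum_mem _ fun g _ => ?_
    obtain ⟨y, hy⟩ := Submodule.mkQ_surjective _ (v g)
    simp only [LinearMap.comp_apply, LinearMap.proj_apply, ← hy]
    exact ⟨g.1 • y, Submodule.smul_mem_smul (Ideal.subset_span g.2) trivial, rfl⟩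
  · rw [Submodule.map_le_iff_le_comap, Submodule.smul_le]
    intro r hr y _
    induction hr using Submodule.span_induction with
    | mem g hg =>
      refine ⟨Pi.single ⟨g, hg⟩ (Submodule.Quotient.mk y), ?_⟩
      rw [LinearMap.lsum_piSingle]
      rfl
    | zero => rw [zero_smul]; exact zero_mem _
    | add a b _ _ ha hb => rw [add_smul]; exact add_mem ha hb
    | smul c a _ ha => exact mul_smul c a y ▸ Submodule.smul_mem _ c ha

theorem exists_pow_smul_eq_bot (I : Ideal B) (hI : I.FG)
    (hnil : ∀ a ∈ I, ∃ n : ℕ, ∀ y : Y, a ^ n • y = 0) :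
    ∃ n : ℕ, (I ^ n • ⊤ : Submodule B Y) = ⊥ := by
  obtain ⟨n, hn⟩ := Ideal.exists_pow_le_of_le_radical_of_fg (I := I)
    (J := Module.annihilator B Y) (fun a ha => by
      obtain ⟨n, hn⟩ := hnil a ha
      exact ⟨n, Module.mem_annihilator.mpr hn⟩) hI
  refine ⟨n, (Submodule.eq_bot_iff _).mpr fun y hy => ?_⟩
  induction hy using Submodule.smul_induction_on' with
  | smul a ha y _ => exact Module.mem_annihilator.mp (hn ha) y
  | add x _ y _ hx hy => rw [hx, hy, add_zero]

/-- A module `Y` with `Y / I Y` Artinian is Artinian if the finitely generated ideal `I` acts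
nilpotently on it. -/
theorem isArtinian_of_quotient_smul (I : Ideal B) (hI : I.FG)
    (hnil : ∀ a ∈ I, ∃ n : ℕ, ∀ y : Y, a ^ n • y = 0)
    (h : IsArtinian B (Y ⧸ (I • ⊤ : Submodule B Y))) : IsArtinian B Y := by
  have key : ∀ n : ℕ, IsArtinian B (Y ⧸ (I ^ n • ⊤ : Submodule B Y)) := by
    intro n
    induction n with
    | zero =>
      have : Subsingleton (Y ⧸ (I ^ 0 • ⊤ : Submodule B Y)) := by
        rw [Submodule.Quotient.subsingleton_iff]; simp
      infer_instance
    | succ n ih =>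
      rw [pow_succ']
      exact isArtinian_quotient_mul_smul I (I ^ n) (hI.pow) h ih
  obtain ⟨n, hn⟩ := exists_pow_smul_eq_bot I hI hnil
  have := key n
  exact isArtinian_of_linearEquiv (Submodule.quotEquivOfEqBot _ hn)

theorem subsingleton_of_quotient_smul (I : Ideal B) (hI : I.FG)
    (hnil : ∀ a ∈ I, ∃ n : ℕ, ∀ y : Y, a ^ n • y = 0)
    (h : Subsingleton (Y ⧸ (I • ⊤ : Submodule B Y))) : Subsingleton Y := by
  have h1 : (I • ⊤ : Submodule B Y) = ⊤ := Submodule.Quotient.subsingleton_iff.mp h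
  obtain ⟨n, hn⟩ := exists_pow_smul_eq_bot I hI hnil
  have key : ∀ n : ℕ, (I ^ n • ⊤ : Submodule B Y) = ⊤ := by
    intro n
    induction n with
    | zero => simp
    | succ n ih => rw [pow_succ, Submodule.mul_smul, h1, ih]
  rw [← Submodule.subsingleton_iff B, ← subsingleton_iff_bot_eq_top, ← hn, key]

end Nilpotent

/-! ### Descent along a split Frobenius -/

section FrobeniusSplit

variable {A : Type*} [CommRing A] (p : ℕ) [Fact p.Prime] [CharP A p]

theorem FrobTwist.algebraMap_apply (a : A) :
    algebraMap A (FrobTwist A p) a = FrobTwist.of A p (a ^ p) := rfl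

/-- The map `F_A(N) → N`, `b ⊗ n ↦ ρ b • n`, attached to an additive map `ρ` on `A` that is linear
over `p`-th powers. It is a retraction of `n ↦ 1 ⊗ n` when `ρ 1 = 1`. -/
noncomputable def FrobTwist.retract (ρ : A →+ A) (hρ : ∀ a b, ρ (a ^ p * b) = a * ρ b) (N : Type*)
    [AddCommGroup N] [Module A N] : FrobTwist A p ⊗[A] N →+ N :=
  TensorProduct.liftAddHom
    ({ toFun := fun b =>
        { toFun := fun n => ρ b • n
          map_zero' := smul_zero _
          map_add' := smul_add _ }
       map_zero' := by ext n; exact (congrArg (· • n) (map_zero ρ)).trans (zero_smul A n)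
       map_add' := fun a b => by
        ext n; exact (congrArg (· • n) (map_add ρ a b)).trans (add_smul _ _ _) } :
      FrobTwist A p →+ N →+ N)
    (fun r b n => by
      exact (congrArg (· • n) (hρ r b)).trans (by rw [mul_comm, mul_smul]; rfl))

theorem FrobTwist.retract_tmul (ρ : A →+ A) (hρ : ∀ a b, ρ (a ^ p * b) = a * ρ b) {N : Type*}
    [AddCommGroup N] [Module A N] (b : A) (n : N) :
    FrobTwist.retract p ρ hρ N (FrobTwist.of A p b ⊗ₜ n) = ρ b • n := rfl

/-- If Frobenius splits on `A`, then `V ↦ F_A(V)` embeds the submodules of `N` into those of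
`F_A(N)`, the retraction of `n ↦ 1 ⊗ n` recovering `V` from the image of `F_A(V)`. -/
theorem isArtinian_of_frobTwist_tensor (ρ : A →+ A) (hρ : ∀ a b, ρ (a ^ p * b) = a * ρ b)
    (hρ1 : ρ 1 = 1) (N : Type*) [AddCommGroup N] [Module A N]
    [IsArtinian (FrobTwist A p) (FrobTwist A p ⊗[A] N)] : IsArtinian A N := by
  let e : Submodule A N → Submodule (FrobTwist A p) (FrobTwist A p ⊗[A] N) := fun V =>
    V.baseChange (FrobTwist A p)
  have he : ∀ V : Submodule A N, ∀ z ∈ e V, FrobTwist.retract p ρ hρ N z ∈ V := by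
    rintro V z hz
    obtain ⟨z, rfl⟩ := hz
    induction z with
    | zero => rw [map_zero, map_zero]; exact zero_mem V
    | add x y hx hy => rw [map_add, map_add]; exact V.add_mem hx hy
    | tmul b n => exact V.smul_mem (ρ b) n.2
  have hmem : ∀ V : Submodule A N, ∀ n, (1 : FrobTwist A p) ⊗ₜ[A] n ∈ e V ↔ n ∈ V := by
    refine fun V n => ⟨fun h => ?_, fun h => Submodule.tmul_mem_baseChange_of_mem 1 h⟩
    have := he V _ h
    change ρ 1 • n ∈ V at this
    rwa [hρ1, one_smul] at this
  have hmono : StrictMono e := by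
    refine Monotone.strictMono_of_injective (fun V W h => Submodule.baseChange_mono _ h)
      fun V W h => ?_
    ext n
    rw [← hmem, h, hmem]
  exact hmono.wellFoundedLT

theorem subsingleton_of_frobTwist_tensor (ρ : A →+ A) (hρ : ∀ a b, ρ (a ^ p * b) = a * ρ b)
    (hρ1 : ρ 1 = 1) (N : Type*) [AddCommGroup N] [Module A N]
    [Subsingleton (FrobTwist A p ⊗[A] N)] : Subsingleton N := by
  refine subsingleton_of_forall_eq 0 fun n => ?_
  have : FrobTwist.retract p ρ hρ N (FrobTwist.of A p 1 ⊗ₜ n) = 0 := by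
    rw [Subsingleton.elim (FrobTwist.of A p 1 ⊗ₜ[A] n) 0, map_zero]
  rwa [FrobTwist.retract_tmul, hρ1, one_smul] at this

variable {T : Type*} [CommRing T] [CharP T p] [Algebra A T]

/-- The ring homomorphism `A → T`, viewed between the Frobenius twists. -/
noncomputable def FrobTwist.map (A T : Type*) [CommRing A] (p : ℕ) [Fact p.Prime] [CharP A p]
    [CommRing T] [CharP T p] [Algebra A T] : FrobTwist A p →+* FrobTwist T p :=
  (algebraMap A T : A →+* T)

theorem FrobTwist.map_algebraMap (a : A) : FrobTwist.map A T p (algebraMap A (FrobTwist A p) a) =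
    algebraMap T (FrobTwist T p) (algebraMap A T a) :=
  map_pow (algebraMap A T) a p

/-- For a surjection `A → T` with kernel `I` and a `T`-module `N`, the comparison map
`F_T(N) → F_A(N) / I F_A(N)`. Submodules of the target pull back to submodules of the source, since
every scalar of `T` acts on the target through a lift to `A`. -/
theorem exists_addHom_frobModule_quotient (hT : Function.Surjective (algebraMap A T))
    (N : Type*) [AddCommGroup N] [Module T N] [Module A N] [IsScalarTower A T N] :
    ∃ f : FrobTwist T p ⊗[T] N →+ (FrobTwist A p ⊗[A] N) ⧸
        (RingHom.ker (FrobTwist.map A T p) • ⊤ : Submodule (FrobTwist A p) (FrobTwist A p ⊗[A] N)),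
      Function.Surjective f ∧
        ∀ t : FrobTwist T p, ∃ a : FrobTwist A p, ∀ x, f (t • x) = a • f x := by
  let π := FrobTwist.map A T p
  have hπ : Function.Surjective π := hT
  let σ : FrobTwist T p → FrobTwist A p := Function.surjInv hπ
  have hσ : ∀ t, π (σ t) = t := Function.surjInv_eq hπ
  let Q : Submodule (FrobTwist A p) (FrobTwist A p ⊗[A] N) := RingHom.ker π • ⊤
  have hQ : ∀ (a b : FrobTwist A p) (n : N), π a = π b →
      Q.mkQ (a ⊗ₜ n) = Q.mkQ (b ⊗ₜ n) := by
    intro a b n hab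
    refine (Submodule.Quotient.eq Q).mpr ?_
    rw [← TensorProduct.sub_tmul]
    have : (a - b) ⊗ₜ[A] n = (a - b) • ((1 : FrobTwist A p) ⊗ₜ[A] n) := by
      rw [TensorProduct.smul_tmul', smul_eq_mul, mul_one]
    rw [this]
    refine Submodule.smul_mem_smul ?_ trivial
    rw [RingHom.mem_ker, map_sub, hab, sub_self]
  let f : FrobTwist T p ⊗[T] N →+ (FrobTwist A p ⊗[A] N) ⧸ Q :=
    TensorProduct.liftAddHom
      { toFun := fun t =>
          { toFun := fun n => Q.mkQ (σ t ⊗ₜ n)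
            map_zero' := by rw [TensorProduct.tmul_zero, map_zero]
            map_add' := fun a b => by rw [TensorProduct.tmul_add, map_add] }
        map_zero' := by
          ext n
          refine (hQ (σ 0) 0 n (by rw [hσ, map_zero])).trans ?_
          rw [TensorProduct.zero_tmul, map_zero]
          rfl
        map_add' := fun s t => by
          ext n
          refine (hQ (σ (s + t)) (σ s + σ t) n (by rw [map_add, hσ, hσ, hσ])).trans ?_
          rw [TensorProduct.add_tmul, map_add]
          rfl }
      (fun r t n => by
        change Q.mkQ (σ (r • t) ⊗ₜ n) = Q.mkQ (σ t ⊗ₜ (r • n))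
        obtain ⟨a, rfl⟩ := hT r
        have h1 : algebraMap A T a • n = a • n := algebraMap_smul T a n
        rw [h1, TensorProduct.tmul_smul, TensorProduct.smul_tmul']
        refine hQ _ _ _ ?_
        rw [hσ, Algebra.smul_def, Algebra.smul_def, map_mul, hσ]
        exact congrArg (· * t) (FrobTwist.map_algebraMap p a).symm)
  have hf : ∀ (t : FrobTwist T p) (n : N), f (t ⊗ₜ n) = Q.mkQ (σ t ⊗ₜ n) := fun t n => rfl
  refine ⟨f, fun z => ?_, fun t => ⟨σ t, fun x => ?_⟩⟩
  · obtain ⟨z, rfl⟩ := Q.mkQ_surjective z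
    induction z with
    | zero => exact ⟨0, by rw [map_zero, map_zero]⟩
    | add x y hx hy =>
      obtain ⟨a, ha⟩ := hx
      obtain ⟨b, hb⟩ := hy
      exact ⟨a + b, by rw [map_add, map_add, ha, hb]⟩
    | tmul a n => exact ⟨π a ⊗ₜ n, hQ _ _ _ (hσ _)⟩
  · induction x with
    | zero => rw [smul_zero, map_zero, smul_zero]
    | add x y hx hy => rw [smul_add, map_add, hx, hy, map_add, smul_add]
    | tmul s n =>
      rw [TensorProduct.smul_tmul', hf, hf, ← map_smul, TensorProduct.smul_tmul']
      exact hQ _ _ _ (by rw [smul_eq_mul, smul_eq_mul, map_mul, hσ, hσ, hσ])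

/-- The `p`-th powers of elements of `ker (A → T)` kill `F_A(N)` for each `T`-module `N`: on
`F_A(N)` multiplication by `a ^ p` is `a` acting on `N`. -/
theorem pow_smul_frobTwist_tensor (N : Type*) [AddCommGroup N] [Module T N] [Module A N]
    [IsScalarTower A T N] (a : FrobTwist A p)
    (ha : a ∈ RingHom.ker (FrobTwist.map A T p)) (y : FrobTwist A p ⊗[A] N) :
    a ^ p • y = 0 := by
  obtain ⟨b, hb, h⟩ : ∃ b : A, algebraMap A T b = 0 ∧ a ^ p = algebraMap A (FrobTwist A p) b :=
    ⟨a, ha, rfl⟩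
  rw [h, algebraMap_smul]
  induction y with
  | zero => simp
  | add x y hx hy => rw [smul_add, hx, hy, add_zero]
  | tmul c n =>
    rw [← TensorProduct.tmul_smul, ← algebraMap_smul T b n, hb, zero_smul, TensorProduct.tmul_zero]

/-- Descent along Frobenius for a quotient `T` of a Noetherian ring `A` with split Frobenius. As
`F_A(N) / I F_A(N)` is an image of `F_T(N)` and `I = ker (A → T)` is nilpotent on `F_A(N)`, the
module `F_A(N)` is Artinian, hence so is `N`. -/
theorem isArtinian_of_frobModule_of_split [IsNoetherianRing A] (ρ : A →+ A)
    (hρ : ∀ a b, ρ (a ^ p * b) = a * ρ b)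
    (hρ1 : ρ 1 = 1) (hT : Function.Surjective (algebraMap A T))
    (N : Type*) [AddCommGroup N] [Module T N] (h : IsArtinian T (FrobModule T p N)) :
    IsArtinian T N := by
  let : Module A N := Module.compHom N (algebraMap A T)
  have : IsScalarTower A T N := IsScalarTower.of_algebraMap_smul fun _ _ => rfl
  have : IsNoetherianRing (FrobTwist A p) := inferInstanceAs (IsNoetherianRing A)
  obtain ⟨f, hf, hs⟩ := exists_addHom_frobModule_quotient p hT N
  have : IsArtinian (FrobTwist T p) (FrobTwist T p ⊗[T] N) := h
  have hq := isArtinian_of_surjective_addHom f hf hs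
  have := isArtinian_of_quotient_smul _
    (IsNoetherian.noetherian (RingHom.ker (FrobTwist.map A T p)))
    (fun a ha => ⟨p, pow_smul_frobTwist_tensor p N a ha⟩) hq
  have := isArtinian_of_frobTwist_tensor p ρ hρ hρ1 N
  exact isArtinian_of_tower A this

theorem subsingleton_of_frobModule_of_split [IsNoetherianRing A] (ρ : A →+ A)
    (hρ : ∀ a b, ρ (a ^ p * b) = a * ρ b)
    (hρ1 : ρ 1 = 1) (hT : Function.Surjective (algebraMap A T))
    (N : Type*) [AddCommGroup N] [Module T N] (h : Subsingleton (FrobModule T p N)) :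
    Subsingleton N := by
  let : Module A N := Module.compHom N (algebraMap A T)
  have : IsScalarTower A T N := IsScalarTower.of_algebraMap_smul fun _ _ => rfl
  have : IsNoetherianRing (FrobTwist A p) := inferInstanceAs (IsNoetherianRing A)
  obtain ⟨f, hf, hs⟩ := exists_addHom_frobModule_quotient p hT N
  have : Subsingleton (FrobTwist T p ⊗[T] N) := h
  have := subsingleton_of_quotient_smul _
    (IsNoetherian.noetherian (RingHom.ker (FrobTwist.map A T p)))
    (fun a ha => ⟨p, pow_smul_frobTwist_tensor p N a ha⟩) hf.subsingleton
  exact subsingleton_of_frobTwist_tensor p ρ hρ hρ1 N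

end FrobeniusSplit

/-! ### Formal smoothness over perfect fields -/

section FormallySmooth

open MvPolynomial in
/-- Vanishing of `H₁(L_{L/K})` in terms of the tautological presentation of `L` by the polynomial
ring on its elements: a relation all of whose partial derivatives vanish in `L` lies in the square
of the ideal of relations. -/
theorem subsingleton_h1Cotangent_iff (K L : Type*) [CommRing K] [CommRing L] [Algebra K L] :
    Subsingleton (Algebra.H1Cotangent K L) ↔ ∀ f : MvPolynomial L K, aeval id f = (0 : L) →
      (∀ i, aeval id (pderiv i f) = (0 : L)) →
      f ∈ RingHom.ker (aeval id : MvPolynomial L K →ₐ[K] L) ^ 2 := by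
  let P := Algebra.Generators.self K L
  have key : ∀ x : P.toExtension.ker, P.toExtension.cotangentComplex (.mk x) = 0 ↔
      ∀ i, aeval id (pderiv i (x.1 : MvPolynomial L K)) = (0 : L) := by
    intro x
    rw [Algebra.Extension.cotangentComplex_mk, ← P.cotangentSpaceBasis.repr.map_eq_zero_iff,
      DFunLike.ext_iff]
    refine forall_congr' fun i => ?_
    exact (P.cotangentSpaceBasis_repr_one_tmul x.1 i) ▸ Iff.rfl
  have hk : ∀ f : MvPolynomial L K, f ∈ P.toExtension.ker ↔ aeval id f = (0 : L) :=
    fun f => Iff.rfl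
  rw [Algebra.Extension.subsingleton_h1Cotangent, injective_iff_map_eq_zero]
  constructor
  · intro h f hf hd
    have := h (.mk ⟨f, (hk f).2 hf⟩) ((key ⟨f, (hk f).2 hf⟩).2 hd)
    rw [Algebra.Extension.Cotangent.mk_eq_zero_iff] at this
    exact this
  · intro h x hx
    obtain ⟨x, rfl⟩ := Algebra.Extension.Cotangent.mk_surjective x
    rw [Algebra.Extension.Cotangent.mk_eq_zero_iff]
    exact h x.1 ((hk _).1 x.2) ((key x).1 hx)

open MvPolynomial in
/-- Every field extension of a perfect field is formally smooth. A polynomial witnessing the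
criterion `subsingleton_h1Cotangent_iff` has finitely many variables, which reduces the claim to
finitely generated extensions. -/
theorem formallySmooth_of_perfectField (K L : Type*) [Field K] [PerfectField K] [Field L]
    [Algebra K L] : Algebra.FormallySmooth K L := by
  refine ⟨inferInstance, (subsingleton_h1Cotangent_iff K L).2 fun f hf hd => ?_⟩
  let E := IntermediateField.adjoin K (f.vars : Set L)
  have hE : Algebra.EssFiniteType K E :=
    IntermediateField.essFiniteType_iff.2 (IntermediateField.fg_adjoin_finset f.vars)
  obtain ⟨g, hgf⟩ := exists_rename_eq_of_vars_subset_range f (Subtype.val : E → L)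
    Subtype.val_injective (by
      rw [Subtype.range_coe]; exact IntermediateField.subset_adjoin _ _)
  have hcomp : ∀ q : MvPolynomial E K, aeval id (rename (Subtype.val : E → L) q) =
      ((aeval id q : E) : L) := by
    intro q
    rw [aeval_rename]
    exact (aeval_algebraMap_apply (B := L) (id : E → E) q)
  have hg : g ∈ RingHom.ker (aeval id : MvPolynomial E K →ₐ[K] E) ^ 2 := by
    refine (subsingleton_h1Cotangent_iff K E).1 inferInstance g ?_ fun i => ?_
    · rw [← hgf, hcomp] at hf; exact_mod_cast hf
    · have := hd i
      rw [← hgf, pderiv_rename Subtype.val_injective, hcomp] at this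
      exact_mod_cast this
  have hmap := Ideal.mem_map_of_mem (rename (R := K) (Subtype.val : E → L)) hg
  rw [Ideal.map_pow, hgf] at hmap
  refine Ideal.pow_right_mono (Ideal.map_le_iff_le_comap.2 fun q hq => ?_) 2 hmap
  rw [Ideal.mem_comap, RingHom.mem_ker, hcomp, (RingHom.mem_ker).1 hq]
  rfl

end FormallySmooth

/-! ### Power series and complete local rings -/

section PowerSeries

variable {k : Type*} [CommRing k] (p : ℕ) {σ : Type*}

/-- The Cartier-type operator on power series attached to an additive map `ρ` on coefficients:
it keeps the coefficients whose exponents are divisible by `p` and applies `ρ` to them. -/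
noncomputable def MvPowerSeries.frobRetract (ρ : k →+ k) :
    MvPowerSeries σ k →+ MvPowerSeries σ k where
  toFun g := fun α => ρ (MvPowerSeries.coeff (p • α) g)
  map_zero' := by ext α; exact map_zero ρ
  map_add' f g := by
    ext α
    exact (congrArg ρ (map_add (MvPowerSeries.coeff (p • α)) f g)).trans (map_add ρ _ _)

theorem MvPowerSeries.coeff_frobRetract (ρ : k →+ k) (g : MvPowerSeries σ k) (α : σ →₀ ℕ) :
    MvPowerSeries.coeff α (MvPowerSeries.frobRetract p ρ g) =
      ρ (MvPowerSeries.coeff (p • α) g) := rfl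

variable [Fact p.Prime]

theorem MvPowerSeries.frobRetract_one (ρ : k →+ k) (hρ1 : ρ 1 = 1) :
    MvPowerSeries.frobRetract p ρ (1 : MvPowerSeries σ k) = 1 := by
  classical
  have hp : p ≠ 0 := (Fact.out : p.Prime).ne_zero
  ext α
  rw [coeff_frobRetract, coeff_one, coeff_one]
  by_cases h : α = 0
  · simp [h, hρ1]
  · rw [if_neg h, if_neg (by simpa [hp] using h), map_zero]

variable [CharP k p]

theorem MvPowerSeries.coeff_pow_char_smul (f : MvPowerSeries σ k) (α : σ →₀ ℕ) :
    MvPowerSeries.coeff (p • α) (f ^ p) = MvPowerSeries.coeff α f ^ p := by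
  have hp : p ≠ 0 := (Fact.out : p.Prime).ne_zero
  rw [← MvPowerSeries.map_frobenius_expand p hp, MvPowerSeries.coeff_map,
    MvPowerSeries.coeff_expand_smul, frobenius_def]

theorem MvPowerSeries.coeff_pow_char_of_not_dvd (f : MvPowerSeries σ k) {α : σ →₀ ℕ} {i : σ}
    (h : ¬ p ∣ α i) : MvPowerSeries.coeff α (f ^ p) = 0 := by
  have hp : p ≠ 0 := (Fact.out : p.Prime).ne_zero
  rw [← MvPowerSeries.map_frobenius_expand p hp, MvPowerSeries.coeff_map,
    MvPowerSeries.coeff_expand_of_not_dvd p hp f h, map_zero]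

/-- Linearity over `p`-th powers: `f ^ p` only has exponents divisible by `p`. -/
theorem MvPowerSeries.frobRetract_pow_mul (ρ : k →+ k) (hρ : ∀ a b, ρ (a ^ p * b) = a * ρ b)
    (f g : MvPowerSeries σ k) :
    MvPowerSeries.frobRetract p ρ (f ^ p * g) = f * MvPowerSeries.frobRetract p ρ g := by
  classical
  have hp : p ≠ 0 := (Fact.out : p.Prime).ne_zero
  ext α
  rw [coeff_frobRetract, coeff_mul, coeff_mul]
  have : ∑ x ∈ Finset.HasAntidiagonal.antidiagonal (p • α), coeff x.1 (f ^ p) * coeff x.2 g =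
      ∑ x ∈ Finset.HasAntidiagonal.antidiagonal α, coeff x.1 f ^ p * coeff (p • x.2) g := by
    symm
    refine Finset.sum_of_injOn (fun x => (p • x.1, p • x.2)) ?_ ?_ ?_ ?_
    · rintro ⟨a, b⟩ - ⟨c, d⟩ - h
      simpa [Prod.ext_iff, nsmul_right_inj hp] using h
    · rintro ⟨a, b⟩ h
      simp only [Finset.mem_coe, Finset.HasAntidiagonal.mem_antidiagonal] at h ⊢
      rw [← h, smul_add]
    · rintro ⟨a, b⟩ h hn
      by_cases hd : ∀ i, p ∣ a i
      · exfalso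
        rw [Finset.HasAntidiagonal.mem_antidiagonal] at h
        have hb : ∀ i, p ∣ b i := fun i => by
          have := DFunLike.congr_fun h i
          simp only [Finsupp.add_apply, Finsupp.smul_apply, smul_eq_mul] at this
          exact (Nat.dvd_add_right (hd i)).1 (this ▸ dvd_mul_right p (α i))
        have hdiv : ∀ c : σ →₀ ℕ, (∀ i, p ∣ c i) → ∃ c', c = p • c' := fun c hc =>
          ⟨c.mapRange (· / p) (Nat.zero_div p), by
            ext i
            simpa using (Nat.mul_div_cancel' (hc i)).symm⟩
        obtain ⟨a, rfl⟩ := hdiv a hd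
        obtain ⟨b, rfl⟩ := hdiv b hb
        refine hn ⟨(a, b), ?_, rfl⟩
        rw [← smul_add, nsmul_right_inj hp] at h
        simpa using h
      · push Not at hd
        obtain ⟨i, hi⟩ := hd
        rw [coeff_pow_char_of_not_dvd p f hi, zero_mul]
    · rintro ⟨a, b⟩ -
      rw [coeff_pow_char_smul]
  rw [this, map_sum]
  exact Finset.sum_congr rfl fun x _ => by rw [hρ, coeff_frobRetract]

end PowerSeries

/-- Frobenius splits on a field, as `k` is a vector space over its subfield of `p`-th powers. -/
theorem exists_frobenius_splitting (k : Type*) [Field k] (p : ℕ) [Fact p.Prime] [CharP k p] :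
    ∃ ρ : k →+ k, (∀ a b, ρ (a ^ p * b) = a * ρ b) ∧ ρ 1 = 1 := by
  let F : k →ₗ[k] FrobTwist k p := (Algebra.linearMap k (FrobTwist k p))
  have hF : LinearMap.ker F = ⊥ := LinearMap.ker_eq_bot.2 (frobenius_inj k p)
  obtain ⟨g, hg⟩ := F.exists_leftInverse_of_injective hF
  refine ⟨(g.toAddMonoidHom : FrobTwist k p →+ k), fun a b => ?_, ?_⟩
  · exact g.map_smul a (FrobTwist.of k p b)
  · have := LinearMap.congr_fun hg 1
    have h1 : F 1 = FrobTwist.of k p 1 := one_pow p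
    exact (congrArg g h1.symm).trans this

section Lift

variable {P T : Type*} [CommRing P] [CommRing T]

/-- A ring map `f : P → T` with `T` complete for the extended ideal `J T`, and onto modulo `J T`,
extends to a surjection from the `J`-adic completion of `P`. -/
theorem exists_surjective_adicCompletion {J : Ideal P} (hJ : J.FG) (f : P →+* T)
    [IsAdicComplete (J.map f) T]
    (hf : Function.Surjective ((Ideal.Quotient.mk (J.map f)).comp f)) :
    ∃ φ : AdicCompletion J P →+* T, Function.Surjective φ := by
  let I := J.map f
  have hle : ∀ n, J ^ n ≤ (I ^ n).comap f := fun n =>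
    (Ideal.pow_right_mono Ideal.le_comap_map n).trans (Ideal.le_comap_pow f n)
  let F : ∀ n, AdicCompletion J P →+* T ⧸ I ^ n := fun n =>
    (Ideal.quotientMap (I ^ n) f (hle n)).comp (AdicCompletion.evalₐ J n : _ →+* _)
  have hF : ∀ {m n : ℕ} (h : m ≤ n), (Ideal.Quotient.factorPow I h).comp (F n) = F m := by
    intro m n h
    ext x
    obtain ⟨y, rfl⟩ := AdicCompletion.mk_surjective J P x
    have hy : ∀ n, F n (AdicCompletion.mk J P y) =
        Ideal.quotientMap (I ^ n) f (hle n) (Ideal.Quotient.mk (J ^ n) (y.val n)) := fun n =>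
      congrArg (Ideal.quotientMap (I ^ n) f (hle n)) (AdicCompletion.evalₐ_mk J n y)
    rw [RingHom.comp_apply, hy, hy, ← AdicCompletion.Ideal.mk_eq_mk J h]
    rfl
  let φ := IsAdicComplete.liftRingHom I F hF
  have hφ : ∀ y : P, φ (algebraMap P _ y) = f y := by
    intro y
    refine IsHausdorff.eq_iff_smodEq (I := I) |>.2 fun n => ?_
    rw [smul_eq_mul, Ideal.mul_top, SModEq.comm]
    refine SModEq.symm ?_
    have := IsAdicComplete.mk_liftRingHom I F hF n (algebraMap P _ y)
    refine this.trans ?_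
    change Ideal.quotientMap (I ^ n) f (hle n) (AdicCompletion.evalₐ J n (algebraMap P _ y)) = _
    rw [AlgHom.commutes]
    rfl
  let Jc := J.map (algebraMap P (AdicCompletion J P))
  have hcomp : φ.comp (algebraMap P _) = f := RingHom.ext hφ
  have hmap : Jc.map φ = J.map f := by rw [Ideal.map_map, hcomp]
  have hpre : IsAdicComplete Jc (AdicCompletion J P) :=
    (IsAdicComplete.map_algebraMap_iff _ _).2 (AdicCompletion.isAdicComplete hJ)
  have hh : IsHausdorff (Jc.map φ) T := by rw [hmap]; infer_instance
  refine ⟨φ, surjective_of_mk_map_comp_surjective (I := Jc) φ ?_⟩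
  rw [hmap]
  intro z
  obtain ⟨y, hy⟩ := hf z
  exact ⟨algebraMap P _ y, by rw [← hy]; exact congrArg _ (hφ y)⟩

end Lift

section Cohen

theorem charP_residueField (T : Type*) [CommRing T] [IsLocalRing T] (p : ℕ) [Fact p.Prime]
    [CharP T p] : CharP (ResidueField T) p := by
  rw [CharP.charP_iff_prime_eq_zero Fact.out, ← map_natCast (residue T), CharP.cast_eq_zero,
    map_zero]

/-- A complete local ring of characteristic `p` has a coefficient field: its residue
field is formally smooth over `ZMod p`, so the identity of the residue field lifts. -/
theorem exists_coefficientField (T : Type*) [CommRing T] [IsLocalRing T] (p : ℕ) [Fact p.Prime]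
    [CharP T p] [IsAdicComplete (maximalIdeal T) T] :
    ∃ s : ResidueField T →+* T, ∀ x, residue T (s x) = x := by
  let _ : Algebra (ZMod p) T := ZMod.algebra T p
  let _ : Algebra (ZMod p) (ResidueField T) :=
    inferInstanceAs (Algebra (ZMod p) (T ⧸ maximalIdeal T))
  have := formallySmooth_of_perfectField (ZMod p) (ResidueField T)
  obtain ⟨g, hg⟩ := Algebra.FormallySmooth.exists_mkₐ_comp_eq_of_isAdicComplete
    (R := ZMod p) (A := ResidueField T) (I := maximalIdeal T) (AlgHom.id (ZMod p) (ResidueField T))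
  exact ⟨g.toRingHom, fun x => DFunLike.congr_fun hg x⟩

/-- The equal-characteristic case of Cohen's structure theorem. Only finite generation of the
maximal ideal is assumed, so that it also shows the complete ring to be Noetherian. -/
theorem exists_surjective_mvPowerSeries (T : Type*) [CommRing T] [IsLocalRing T]
    (hfg : (maximalIdeal T).FG) (p : ℕ) [Fact p.Prime] [CharP T p]
    [IsAdicComplete (maximalIdeal T) T] :
    ∃ (n : ℕ) (φ : MvPowerSeries (Fin n) (ResidueField T) →+* T), Function.Surjective φ := by
  obtain ⟨s, hs⟩ := exists_coefficientField T p
  obtain ⟨n, x, hx⟩ := Submodule.fg_iff_exists_fin_generating_family.1 hfg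
  let f : MvPolynomial (Fin n) (ResidueField T) →+* T := MvPolynomial.eval₂Hom s x
  have hI : (MvPolynomial.idealOfVars (Fin n) (ResidueField T)).map f = maximalIdeal T := by
    rw [MvPolynomial.idealOfVars, Ideal.map_span, ← Set.range_comp]
    refine Eq.trans ?_ hx
    congr 2
    ext i
    exact MvPolynomial.eval₂Hom_X' s x i
  have hc : IsAdicComplete ((MvPolynomial.idealOfVars (Fin n) (ResidueField T)).map f) T := by
    rw [hI]; infer_instance
  obtain ⟨φ, hφ⟩ := exists_surjective_adicCompletion
    (MvPolynomial.idealOfVars_fg (Fin n) (ResidueField T)) f (by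
      rw [hI]
      intro z
      refine ⟨MvPolynomial.C z, ?_⟩
      exact (congrArg (Ideal.Quotient.mk _) (MvPolynomial.eval₂Hom_C s x z)).trans (hs z))
  let e := (MvPowerSeries.toAdicCompletionAlgEquiv (Fin n) (ResidueField T)).toRingEquiv
  exact ⟨n, φ.comp e.toRingHom, hφ.comp e.surjective⟩

/-- A complete Noetherian local ring of characteristic `p` is a quotient of a Noetherian ring with
split Frobenius. -/
theorem exists_split_presentation (T : Type u) [CommRing T] [IsLocalRing T] [IsNoetherianRing T]
    (p : ℕ) [Fact p.Prime] [CharP T p] [IsAdicComplete (maximalIdeal T) T] :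
    ∃ (A : Type u) (_ : CommRing A) (_ : IsNoetherianRing A) (_ : CharP A p) (_ : Algebra A T)
      (ρ : A →+ A), (∀ a b, ρ (a ^ p * b) = a * ρ b) ∧ ρ 1 = 1 ∧
        Function.Surjective (algebraMap A T) := by
  obtain ⟨n, φ, hφ⟩ :=
    exists_surjective_mvPowerSeries T (IsNoetherian.noetherian (maximalIdeal T)) p
  have := charP_residueField T p
  obtain ⟨ρ, hρ, hρ1⟩ := exists_frobenius_splitting (ResidueField T) p
  have : CharP (MvPowerSeries (Fin n) (ResidueField T)) p :=
    charP_of_injective_ringHom (f := MvPowerSeries.C) MvPowerSeries.C_injective p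
  exact ⟨MvPowerSeries (Fin n) (ResidueField T), inferInstance, inferInstance, inferInstance,
    φ.toAlgebra, MvPowerSeries.frobRetract p ρ, MvPowerSeries.frobRetract_pow_mul p ρ hρ,
    MvPowerSeries.frobRetract_one p ρ hρ1, hφ⟩

theorem isArtinian_of_frobModule_of_complete (T : Type u) [CommRing T] [IsLocalRing T]
    [IsNoetherianRing T] (p : ℕ) [Fact p.Prime] [CharP T p] [IsAdicComplete (maximalIdeal T) T]
    (N : Type v) [AddCommGroup N] [Module T N]
    (h : IsArtinian T (FrobModule T p N)) : IsArtinian T N := by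
  obtain ⟨A, _, _, _, _, ρ, hρ, hρ1, hT⟩ := exists_split_presentation T p
  exact isArtinian_of_frobModule_of_split p ρ hρ hρ1 hT N h

theorem subsingleton_of_frobModule_of_complete (T : Type u) [CommRing T] [IsLocalRing T]
    [IsNoetherianRing T] (p : ℕ) [Fact p.Prime] [CharP T p] [IsAdicComplete (maximalIdeal T) T]
    (N : Type v) [AddCommGroup N] [Module T N]
    (h : Subsingleton (FrobModule T p N)) : Subsingleton N := by
  obtain ⟨A, _, _, _, _, ρ, hρ, hρ1, hT⟩ := exists_split_presentation T p
  exact subsingleton_of_frobModule_of_split p ρ hρ hρ1 hT N h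

end Cohen

/-! ### Completion at a maximal ideal -/

section Completion

/-- The completed localisation of a Noetherian ring `R` at a maximal ideal `m`. It is Noetherian as
a quotient of a power series ring. -/
theorem exists_completion (R : Type u) [CommRing R] [IsNoetherianRing R] (p : ℕ) [Fact p.Prime]
    [CharP R p] (m : Ideal R) [m.IsMaximal] :
    ∃ (T : Type u) (_ : CommRing T) (_ : IsLocalRing T) (_ : IsNoetherianRing T) (_ : CharP T p)
      (_ : IsAdicComplete (maximalIdeal T) T) (_ : Algebra R T) (_ : Module.Flat R T),
      m.map (algebraMap R T) = maximalIdeal T ∧ ∀ r ∉ m, IsUnit (algebraMap R T r) := by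
  let L := Localization.AtPrime m
  have hL : IsNoetherianRing L := IsLocalization.isNoetherianRing m.primeCompl L inferInstance
  let T := AdicCompletion (maximalIdeal L) L
  have : Module.Flat R L := IsLocalization.flat L m.primeCompl
  have : Module.Flat L T := AdicCompletion.flat_of_isNoetherian (maximalIdeal L)
  have : Module.Flat R T := Module.Flat.trans R L T
  have hmap : algebraMap R T = (algebraMap L T).comp (algebraMap R L) :=
    IsScalarTower.algebraMap_eq R L T
  have hchar : CharP T p := by
    rw [CharP.charP_iff_prime_eq_zero Fact.out, ← map_natCast (algebraMap R T),
      CharP.cast_eq_zero, map_zero]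
  have hmax : maximalIdeal T = (maximalIdeal L).map (algebraMap L T) :=
    AdicCompletion.maximalIdeal_eq_map
  have hfg : (maximalIdeal T).FG := by
    rw [hmax]
    exact Ideal.FG.map (IsNoetherian.noetherian (maximalIdeal L)) (algebraMap L T)
  have hT : IsNoetherianRing T := by
    obtain ⟨n, φ, hφ⟩ := exists_surjective_mvPowerSeries T hfg p
    exact isNoetherianRing_of_surjective _ _ φ hφ
  refine ⟨T, inferInstance, inferInstance, hT, hchar, inferInstance, inferInstance,
    inferInstance, ?_, fun r hr => ?_⟩
  · rw [hmap, ← Ideal.map_map, Localization.AtPrime.map_eq_maximalIdeal, hmax]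
  · rw [hmap]
    exact (IsLocalization.map_units L (⟨r, hr⟩ : m.primeCompl)).map (algebraMap L T)

variable {R : Type*} [CommRing R] {T : Type*} [CommRing T] [Algebra R T]

/-- Completing at `m` preserves Artinian modules: `m` extends to the maximal ideal of `T`, every
other maximal ideal of `R` to the unit ideal. -/
theorem isArtinian_tensor_of_maximal [IsLocalRing T] [IsNoetherianRing R] {m : Ideal R}
    [m.IsMaximal] (hm : m.map (algebraMap R T) = maximalIdeal T)
    (hu : ∀ r ∉ m, IsUnit (algebraMap R T r)) (X : Type*) [AddCommGroup X] [Module R X]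
    [IsArtinian R X] : IsArtinian T (T ⊗[R] X) := by
  refine isArtinian_tensor T (fun J hJ => ?_) X
  by_cases h : J = m
  · subst h
    rw [hm]
    have : IsSimpleModule T (T ⧸ maximalIdeal T) :=
      isSimpleModule_iff_isCoatom.2 (maximalIdeal.isMaximal T).out
    infer_instance
  · have hle : ¬ J ≤ m := fun h' => h (hJ.eq_of_le (Ideal.IsPrime.ne_top inferInstance) h')
    obtain ⟨r, hrJ, hrm⟩ := Set.not_subset.1 hle
    have : J.map (algebraMap R T) = ⊤ :=
      Ideal.eq_top_of_isUnit_mem _ (Ideal.mem_map_of_mem _ hrJ) (hu r hrm)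
    rw [this]
    infer_instance

theorem subsingleton_tensor_of_forall_exists {m : Ideal R}
    (hu : ∀ r ∉ m, IsUnit (algebraMap R T r)) {X : Type*} [AddCommGroup X] [Module R X]
    (h : ∀ x : X, ∃ r ∉ m, r • x = 0) : Subsingleton (T ⊗[R] X) := by
  refine subsingleton_of_forall_eq 0 fun z => ?_
  induction z with
  | zero => rfl
  | add x y hx hy => rw [hx, hy, add_zero]
  | tmul t x =>
    obtain ⟨r, hr, hx⟩ := h x
    obtain ⟨s, hs⟩ := (hu r hr).exists_left_inv
    have : t = r • (t * s) := by
      rw [Algebra.smul_def, mul_left_comm, mul_comm _ s, hs, mul_one]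
    rw [this, TensorProduct.smul_tmul, hx, TensorProduct.tmul_zero]

/-- A vector that dies in the flat base change to `T` dies in the localisation at `m`: its
annihilator extends to the unit ideal of `T`, so it is not contained in `m`. -/
theorem exists_notMem_smul_eq_zero [Module.Flat R T] {m : Ideal R}
    (hm : m.map (algebraMap R T) ≠ ⊤) {Q : Type*} [AddCommGroup Q] [Module R Q] {q : Q}
    (hq : (1 : T) ⊗ₜ[R] q = 0) : ∃ r ∉ m, r • q = 0 := by
  by_contra! hcon
  let φ : R →ₗ[R] Q := LinearMap.toSpanSingleton R Q q
  have hex : Function.Exact ((LinearMap.ker φ).subtype.lTensor T) (φ.lTensor T) :=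
    Module.Flat.lTensor_exact T (LinearMap.exact_subtype_ker_map φ)
  obtain ⟨z, hz⟩ := (hex ((1 : T) ⊗ₜ[R] (1 : R))).1 (by
    rw [LinearMap.lTensor_tmul, LinearMap.toSpanSingleton_apply, one_smul, hq])
  have key : ∀ z : T ⊗[R] LinearMap.ker φ,
      TensorProduct.rid R T ((LinearMap.ker φ).subtype.lTensor T z) ∈ m.map (algebraMap R T) := by
    intro z
    induction z with
    | zero => simp
    | add x y hx hy => rw [map_add, map_add]; exact Ideal.add_mem _ hx hy
    | tmul t r =>
      rw [LinearMap.lTensor_tmul, TensorProduct.rid_tmul, Algebra.smul_def]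
      refine Ideal.mul_mem_right _ _ (Ideal.mem_map_of_mem _ ?_)
      by_contra hr
      exact hcon _ hr r.2
  refine hm ((Ideal.eq_top_iff_one _).2 ?_)
  have := key z
  rwa [hz, TensorProduct.rid_tmul, one_smul] at this

end Completion

section FrobBaseChange

variable {R : Type u} [CommRing R] (p : ℕ) [Fact p.Prime] [CharP R p] {T : Type*} [CommRing T]
  [CharP T p] [Algebra R T] (M : Type*) [AddCommGroup M] [Module R M]

/-- The additive map `F_R(M) → F_T(T ⊗ M)`, `s ⊗ x ↦ s ⊗ (1 ⊗ x)`. -/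
noncomputable def frobModuleToBaseChange :
    FrobTwist R p ⊗[R] M →+ FrobTwist T p ⊗[T] (T ⊗[R] M) :=
  TensorProduct.liftAddHom
    ({ toFun := fun s =>
        { toFun := fun x => FrobTwist.of T p (algebraMap R T s) ⊗ₜ[T] ((1 : T) ⊗ₜ[R] x)
          map_zero' := by rw [TensorProduct.tmul_zero, TensorProduct.tmul_zero]
          map_add' := fun x y => by rw [TensorProduct.tmul_add, TensorProduct.tmul_add] }
       map_zero' := by
        ext x
        exact (congrArg (fun z : FrobTwist T p => z ⊗ₜ[T] ((1 : T) ⊗ₜ[R] x))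
          (map_zero (algebraMap R T))).trans (TensorProduct.zero_tmul _ _)
       map_add' := fun a b => by
        ext x
        exact (congrArg (fun z : FrobTwist T p => z ⊗ₜ[T] ((1 : T) ⊗ₜ[R] x))
          (map_add (algebraMap R T) a b)).trans (TensorProduct.add_tmul _ _ _) } :
      FrobTwist R p →+ M →+ FrobTwist T p ⊗[T] (T ⊗[R] M))
    (fun r (s : R) x => by
      have h1 : FrobTwist.of T p (algebraMap R T (r ^ p * s)) =
          algebraMap R T r • FrobTwist.of T p (algebraMap R T s) := by
        rw [map_mul, map_pow]; rfl
      have h2 : (1 : T) ⊗ₜ[R] (r • x) = algebraMap R T r • ((1 : T) ⊗ₜ[R] x) := by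
        rw [algebraMap_smul, TensorProduct.tmul_smul]
      refine (congrArg (fun z : FrobTwist T p => z ⊗ₜ[T] ((1 : T) ⊗ₜ[R] x)) h1).trans ?_
      refine (TensorProduct.smul_tmul _ _ _).trans ?_
      rw [← h2]
      rfl)

theorem frobModuleToBaseChange_tmul (s : R) (x : M) :
    frobModuleToBaseChange p (T := T) M (FrobTwist.of R p s ⊗ₜ[R] x) =
      FrobTwist.of T p (algebraMap R T s) ⊗ₜ[T] ((1 : T) ⊗ₜ[R] x) := rfl

theorem frobModuleToBaseChange_smul (r : R) (z : FrobTwist R p ⊗[R] M) :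
    frobModuleToBaseChange p (T := T) M (FrobTwist.of R p r • z) =
      FrobTwist.of T p (algebraMap R T r) • frobModuleToBaseChange p (T := T) M z := by
  induction z with
  | zero => rw [smul_zero, map_zero, smul_zero]
  | add x y hx hy => rw [smul_add, map_add, hx, hy, map_add, smul_add]
  | tmul s x =>
    exact congrArg (fun z : FrobTwist T p => z ⊗ₜ[T] ((1 : T) ⊗ₜ[R] x))
      (map_mul (algebraMap R T) r s)

/-- The base change comparison `T ⊗ F_R(M) → F_T(T ⊗ M)`, `t ⊗ z ↦ t • z`, is `T`-linear and onto.
The scalar `a` on the right is written in `FrobTwist T p`, which carries the multiplication on the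
left tensor factor. -/
theorem exists_addHom_tensor_frobModule :
    ∃ f : T ⊗[R] FrobModule R p M →+ FrobTwist T p ⊗[T] (T ⊗[R] M), Function.Surjective f ∧
      ∀ (a : T) z, f (a • z) = FrobTwist.of T p a • f z := by
  let f : T ⊗[R] FrobModule R p M →+ FrobTwist T p ⊗[T] (T ⊗[R] M) :=
    TensorProduct.liftAddHom
      { toFun := fun t =>
          ((DistribSMul.toAddMonoidHom (FrobTwist T p ⊗[T] (T ⊗[R] M)) (FrobTwist.of T p t)).comp
            (frobModuleToBaseChange p (T := T) M) : FrobModule R p M →+ _)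
        map_zero' := by ext z; exact zero_smul (FrobTwist T p) _
        map_add' := fun a b => by ext z; exact add_smul (R := FrobTwist T p) a b _ }
      (fun r t z => by
        refine Eq.trans ?_ (congrArg (FrobTwist.of T p t • ·)
          (frobModuleToBaseChange_smul p (T := T) M r z).symm)
        refine Eq.trans ?_ (smul_smul _ _ _).symm
        refine congrArg (fun c : FrobTwist T p => c • frobModuleToBaseChange p (T := T) M z) ?_
        exact (Algebra.smul_def r t).trans (mul_comm _ _))
  have hf : ∀ t z, f (t ⊗ₜ z) = FrobTwist.of T p t • frobModuleToBaseChange p (T := T) M z :=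
    fun _ _ => rfl
  refine ⟨f, ?_, fun a z => ?_⟩
  · rw [← AddMonoidHom.range_eq_top, eq_top_iff]
    rintro z -
    induction z with
    | zero => exact zero_mem _
    | add x y hx hy => exact add_mem hx hy
    | tmul t y =>
      induction y with
      | zero => rw [TensorProduct.tmul_zero]; exact zero_mem _
      | add x y hx hy => rw [TensorProduct.tmul_add]; exact add_mem hx hy
      | tmul b x =>
        obtain ⟨c, rfl⟩ : ∃ c : T, FrobTwist.of T p c = t := ⟨t, rfl⟩
        refine ⟨(b ^ p * c) ⊗ₜ[R] (FrobTwist.of R p 1 ⊗ₜ[R] x : FrobTwist R p ⊗[R] M), ?_⟩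
        refine (hf _ _).trans ?_
        rw [frobModuleToBaseChange_tmul, map_one]
        have hb : b ⊗ₜ[R] x = b • ((1 : T) ⊗ₜ[R] x) := by
          rw [TensorProduct.smul_tmul', smul_eq_mul, mul_one]
        rw [hb, ← TensorProduct.smul_tmul]
        exact congrArg (fun z : FrobTwist T p => z ⊗ₜ[T] ((1 : T) ⊗ₜ[R] x)) (mul_one (b ^ p * c))
  · induction z with
    | zero => rw [smul_zero, map_zero, smul_zero]
    | add x y hx hy => rw [smul_add, map_add, hx, hy, map_add, smul_add]
    | tmul t x =>
      rw [TensorProduct.smul_tmul', hf, hf, smul_smul]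
      rfl

theorem isArtinian_frobModule_tensor (h : IsArtinian T (T ⊗[R] FrobModule R p M)) :
    IsArtinian T (FrobModule T p (T ⊗[R] M)) := by
  obtain ⟨f, hf, hs⟩ := exists_addHom_tensor_frobModule (R := R) p (T := T) M
  have : IsArtinian (FrobTwist T p) (FrobTwist T p ⊗[T] (T ⊗[R] M)) :=
    isArtinian_of_surjective_addHom f hf fun r => ⟨FrobTwist.of T p r, hs r⟩
  exact this

theorem subsingleton_frobModule_tensor (h : Subsingleton (T ⊗[R] FrobModule R p M)) :
    Subsingleton (FrobModule T p (T ⊗[R] M)) := by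
  obtain ⟨f, hf, -⟩ := exists_addHom_tensor_frobModule (R := R) p (T := T) M
  exact hf.subsingleton

end FrobBaseChange

/-! ### The socle of an Artinian module and the local-global step -/

section Socle

variable {R : Type*} [CommRing R] {X : Type*} [AddCommGroup X] [Module R X]

/-- An Artinian module has a nonzero vector killed by `m` for only finitely many maximal ideals
`m`. -/
theorem finite_setOf_isMaximal_socle (X : Type*) [AddCommGroup X] [Module R X] [IsArtinian R X] :
    {m : Ideal R | m.IsMaximal ∧ ∃ y : X, y ≠ 0 ∧ ∀ r ∈ m, r • y = 0}.Finite := by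
  by_contra hinf
  let e := Set.Infinite.natEmbedding _ hinf
  have hmax : ∀ i, (e i).1.IsMaximal := fun i => (e i).2.1
  choose y hy0 hy using fun i => (e i).2.2
  let D : ℕ → Submodule R X := fun n => Submodule.span R (y '' Set.Ici n)
  have hD : Antitone D := fun a b h => Submodule.span_mono (Set.image_mono (Set.Ici_subset_Ici.2 h))
  obtain ⟨n, hn⟩ := IsArtinian.exists_antitone_stable D hD
  have hmem : y n ∈ D (n + 1) := by
    rw [← hn (n + 1) n.le_succ]
    exact Submodule.subset_span ⟨n, Set.mem_Ici.2 le_rfl, rfl⟩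
  -- `D (n + 1)` is spanned by vectors supported at maximal ideals other than the `n`-th one
  have hkill : ∀ d ∈ D (n + 1), ∃ r ∉ (e n).1, r • d = 0 := by
    intro d hd
    induction hd using Submodule.span_induction with
    | mem x hx =>
      obtain ⟨i, hi, rfl⟩ := hx
      have hne : ¬ (e i).1 ≤ (e n).1 := fun h => by
        have h1 := (hmax i).eq_of_le (hmax n).ne_top h
        have h2 : i = n := e.injective (Subtype.ext h1)
        have := Set.mem_Ici.1 hi
        omega
      obtain ⟨r, hr, hrn⟩ := Set.not_subset.1 hne
      exact ⟨r, hrn, hy i r hr⟩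
    | zero => exact ⟨1, (Ideal.ne_top_iff_one _).1 (hmax n).ne_top, smul_zero _⟩
    | add a b _ _ ha hb =>
      obtain ⟨r, hr, hra⟩ := ha
      obtain ⟨s, hs, hsb⟩ := hb
      refine ⟨r * s, fun h => ((hmax n).isPrime.mem_or_mem h).elim hr hs, ?_⟩
      rw [smul_add, mul_smul r s b, hsb, mul_comm, mul_smul, hra, smul_zero, smul_zero, add_zero]
    | smul c a _ ha =>
      obtain ⟨r, hr, hra⟩ := ha
      exact ⟨r, hr, by rw [smul_comm, hra, smul_zero]⟩
  obtain ⟨r, hr, hrn⟩ := hkill _ hmem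
  obtain ⟨a, i, hi, hai⟩ := (hmax n).exists_inv hr
  refine hy0 n ?_
  rw [← one_smul R (y n), ← hai, add_smul, mul_smul, hrn, smul_zero, hy n i hi, add_zero]

/-- If no nonzero vector of an Artinian module is killed by `m`, the localisation at `m`
vanishes. -/
theorem exists_notMem_smul_eq_zero_of_socle [IsNoetherianRing R] [IsArtinian R X] {m : Ideal R}
    (hm : m.IsMaximal) (hsoc : ∀ y : X, (∀ r ∈ m, r • y = 0) → y = 0) (x : X) :
    ∃ r ∉ m, r • x = 0 := by
  -- replace `x` by a multiple `y` generating a submodule that is minimal among such multiples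
  have hne : {V : Submodule R X | ∃ s ∉ m, V = Submodule.span R {s • x}}.Nonempty :=
    ⟨_, 1, (Ideal.ne_top_iff_one _).1 hm.ne_top, rfl⟩
  obtain ⟨V, ⟨s, hs, rfl⟩, hmin⟩ := IsArtinian.set_has_minimal _ hne
  refine ⟨s, hs, ?_⟩
  set y := s • x with hy
  have hself : ∀ t ∉ m, ∃ c : R, c • t • y = y := by
    intro t ht
    have hle : Submodule.span R {t • y} ≤ Submodule.span R {y} :=
      (Submodule.span_singleton_le_iff_mem _ _).2
        (Submodule.smul_mem _ _ (Submodule.mem_span_singleton_self y))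
    have hnlt := hmin (Submodule.span R {t • y})
      ⟨t * s, fun h => (hm.isPrime.mem_or_mem h).elim ht hs, by rw [mul_smul, hy]⟩
    have heq : Submodule.span R {t • y} = Submodule.span R {y} := eq_of_le_of_not_lt hle hnlt
    exact Submodule.mem_span_singleton.1 (heq ▸ Submodule.mem_span_singleton_self y)
  have hnil : ∀ z ∈ m, ∃ j : ℕ, z ^ j • y = 0 := by
    intro z hz
    obtain ⟨j, r, hj⟩ := IsArtinian.exists_pow_smul_eq z y
    refine ⟨j, ?_⟩
    have hu : 1 - r * z ∉ m := fun h => (Ideal.ne_top_iff_one _).1 hm.ne_top (by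
      have := m.add_mem h (m.mul_mem_left r hz)
      rwa [sub_add_cancel] at this)
    obtain ⟨c, hc⟩ := hself _ hu
    have h0 : (z ^ j * (1 - r * z)) • y = 0 := by
      rw [mul_sub, mul_one, sub_smul, hj, sub_eq_zero]
      congr 1
      ring
    rw [← hc, smul_comm, ← mul_smul (z ^ j), h0, smul_zero]
  by_contra hy0
  obtain ⟨P, hP, hle⟩ := exists_le_isAssociatedPrime_of_isNoetherianRing R y hy0
  have hmP : m ≤ P := fun z hz => by
    obtain ⟨j, hj⟩ := hnil z hz
    exact hP.isPrime.mem_of_pow_mem j (hle (Submodule.mem_colon_singleton.2 (by simpa using hj)))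
  have hPm : m = P := hm.eq_of_le hP.isPrime.ne_top hmP
  obtain ⟨-, w, hw⟩ := Submodule.isAssociatedPrime_iff.1 hP
  have hw0 : w = 0 := hsoc w fun r hr => by
    rw [hPm, hw] at hr
    simpa using Submodule.mem_colon_singleton.1 hr
  refine hm.ne_top ?_
  rw [hPm, hw, hw0, Ideal.eq_top_iff_one, Submodule.mem_colon_singleton]
  simp

end Socle

section Descent

variable {R : Type u} [CommRing R]

theorem one_tmul_mk_eq_zero {T : Type*} [CommRing T] [Algebra R T] {M : Type*} [AddCommGroup M]
    [Module R M] {N : Submodule R M} {q : M} (h : (1 : T) ⊗ₜ[R] q ∈ N.baseChange T) :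
    (1 : T) ⊗ₜ[R] (Submodule.Quotient.mk q : M ⧸ N) = 0 := by
  have hle : N.baseChange T ≤ LinearMap.ker (N.mkQ.baseChange T) := by
    rw [Submodule.baseChange_eq_span, Submodule.span_le]
    rintro _ ⟨z, hz, rfl⟩
    have : N.mkQ z = 0 := by simpa using hz
    simp only [SetLike.mem_coe, LinearMap.mem_ker, TensorProduct.mk_apply,
      LinearMap.baseChange_tmul, this, TensorProduct.tmul_zero]
  simpa using hle h

variable [IsNoetherianRing R] (p : ℕ) [Fact p.Prime] [CharP R p] {M : Type v} [AddCommGroup M]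
  [Module R M]

/-- A descending chain in `M` stabilises after completion at `m`, hence also after localisation at
`m`. -/
theorem exists_smul_mem_of_frobModule [IsArtinian R (FrobModule R p M)] {N : ℕ → Submodule R M}
    (hN : Antitone N) (m : Ideal R) (hm : m.IsMaximal) :
    ∃ i, ∀ j, i ≤ j → ∀ q ∈ N i, ∃ r ∉ m, r • q ∈ N j := by
  obtain ⟨T, _, _, _, _, _, _, _, hmT, hu⟩ := exists_completion R p m
  have h1 : IsArtinian T (T ⊗[R] FrobModule R p M) := isArtinian_tensor_of_maximal hmT hu _
  have h2 : IsArtinian T (T ⊗[R] M) :=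
    isArtinian_of_frobModule_of_complete T p _ (isArtinian_frobModule_tensor p M h1)
  obtain ⟨i, hi⟩ := IsArtinian.exists_antitone_stable (fun j => (N j).baseChange T)
    fun a b h => Submodule.baseChange_mono _ (hN h)
  refine ⟨i, fun j hj q hq => ?_⟩
  have hmem : (1 : T) ⊗ₜ[R] q ∈ (N j).baseChange T :=
    hi j hj ▸ Submodule.tmul_mem_baseChange_of_mem 1 hq
  obtain ⟨r, hr, hrq⟩ := exists_notMem_smul_eq_zero
    (hmT ▸ (maximalIdeal.isMaximal T).ne_top) (one_tmul_mk_eq_zero hmem)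
  exact ⟨r, hr, (Submodule.Quotient.mk_eq_zero _).1 hrq⟩

/-- If `m` does not occur in the socle of `F_R(M)`, then the localisation of `M` at `m` vanishes. -/
theorem exists_smul_eq_zero_of_frobModule [IsArtinian R (FrobModule R p M)] (m : Ideal R)
    (hm : m.IsMaximal) (hsoc : ∀ y : FrobModule R p M, (∀ r ∈ m, r • y = 0) → y = 0) (q : M) :
    ∃ r ∉ m, r • q = 0 := by
  obtain ⟨T, _, _, _, _, _, _, _, hmT, hu⟩ := exists_completion R p m
  have h1 : Subsingleton (T ⊗[R] FrobModule R p M) :=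
    subsingleton_tensor_of_forall_exists hu (exists_notMem_smul_eq_zero_of_socle hm hsoc)
  have h2 : Subsingleton (T ⊗[R] M) :=
    subsingleton_of_frobModule_of_complete T p _ (subsingleton_frobModule_tensor p M h1)
  exact exists_notMem_smul_eq_zero (hmT ▸ (maximalIdeal.isMaximal T).ne_top)
    (Subsingleton.elim ((1 : T) ⊗ₜ[R] q) 0)

/-- A descending chain in `M` stabilises locally at each of the finitely many maximal ideals in the
socle of `F_R(M)`, and is zero locally at all the others, so it stabilises at a uniform stage. -/
theorem isArtinian_of_frobModule [IsArtinian R (FrobModule R p M)] : IsArtinian R M := by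
  refine isArtinian_of_antitone fun N hN => ?_
  have hfin := finite_setOf_isMaximal_socle (R := R) (FrobModule R p M)
  have hex : ∀ m : Ideal R, ∃ i, m.IsMaximal →
      ∀ j, i ≤ j → ∀ q ∈ N i, ∃ r ∉ m, r • q ∈ N j := fun m => by
    by_cases hm : m.IsMaximal
    · obtain ⟨i, hi⟩ := exists_smul_mem_of_frobModule p hN m hm
      exact ⟨i, fun _ => hi⟩
    · exact ⟨0, fun h => absurd h hm⟩
  choose i hi using hex
  let n := hfin.toFinset.sup i
  refine ⟨n, fun j hj q hq => ?_⟩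
  let I : Ideal R := (N j).comap (LinearMap.toSpanSingleton R M q)
  suffices h : I = ⊤ by
    have : (1 : R) ∈ I := h ▸ Submodule.mem_top
    simpa [I] using this
  by_contra hI
  obtain ⟨m, hm, hle⟩ := Ideal.exists_le_maximal I hI
  obtain ⟨r, hr, hrq⟩ : ∃ r ∉ m, r • q ∈ N j := by
    by_cases hs : ∃ y : FrobModule R p M, y ≠ 0 ∧ ∀ r ∈ m, r • y = 0
    · have hin : i m ≤ n := Finset.le_sup (f := i) (hfin.mem_toFinset.2 ⟨hm, hs⟩)
      exact hi m hm j (hin.trans hj) q (hN hin hq)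
    · push Not at hs
      obtain ⟨r, hr, hrq⟩ := exists_smul_eq_zero_of_frobModule p m hm
        (fun y hy => by
          by_contra hy0
          obtain ⟨r, hr, hne⟩ := hs y hy0
          exact hne (hy r hr)) q
      exact ⟨r, hr, hrq ▸ zero_mem _⟩
  exact hr (hle (by simpa [I] using hrq))

end Descent

/-- If `R` is a commutative Noetherian ring of prime characteristic `p`
and `M` is any `R`-module, then `M` is Artinian iff `F_R(M)` is Artinian. -/
theorem isArtinian_frobModule_iff (R : Type u) [CommRing R] [IsNoetherianRing R]
    (p : ℕ) [Fact p.Prime] [CharP R p] (M : Type v) [AddCommGroup M] [Module R M] :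
    IsArtinian R M ↔ IsArtinian R (FrobModule R p M) :=
  ⟨fun _ => isArtinian_frobModule p M, fun _ => isArtinian_of_frobModule p⟩
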